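/- arXiv:2503.04494 — 3 statements merged into one kernel-verified Lean document; each statement's English description precedes it below -/
import Mathlib

section
/- Let A be a finite abelian group (written additively), let a ∈ A, let n be the additive order of a, and let Λ_{a/A} = (A × ℝ)/⟨(a,1)⟩. Then: (i) the homomorphism ι : ℝ → Λ_{a/A} given by ι(t) = ⟦(0,t)⟧ has kernel equal to the subgroup nℤ of ℝ generated by n; (ii) there is a homomorphism p : Λ_{a/A} → A/⟨a⟩ satisfying p(⟦(x,t)⟧) = x + ⟨a⟩ for all x ∈ A and t ∈ ℝ; (iii) p is surjective; and (iv) the kernel of p equals the range of ι. In other words, Λ_{a/A} sits in a short exact sequence 0 → ℝ/nℤ → Λ_{a/A} → A/⟨a⟩ → 0. -/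
/-!
Write `Λ = (A × B)/⟨(a, b)⟩`; everything descends from `0 → B → A × B → A → 0`. The kernel of
`B → Λ` is the trace of `⟨(a, b)⟩` on `B`: the first coordinate of `k • (a, b)` vanishes exactly
when the order of `a` divides `k`. The projection `A × B → A` carries `⟨(a, b)⟩` onto `⟨a⟩`, so the
kernel of the induced map `Λ → A/⟨a⟩` is just the image of the kernel `B` of the projection.
-/

open AddMonoidHom AddSubgroup

section AddGroup

variable {G H : Type*} [AddGroup G] [AddGroup H]

theorem ker_prod_fst_eq_range_inr : (fst G H).ker = (inr G H).range := by
  ext ⟨x, y⟩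
  simp only [mem_ker, coe_fst, mem_range, inr_apply, Prod.mk.injEq, exists_eq_right,
    eq_comm (a := (0 : G))]

theorem comap_inr_zmultiples (a : G) (b : H) :
    (zmultiples (a, b)).comap (inr G H) = zmultiples (addOrderOf a • b) := by
  ext t
  simp only [mem_comap, mem_zmultiples_iff, inr_apply, Prod.smul_mk, Prod.mk.injEq]
  constructor
  · rintro ⟨k, hka, rfl⟩
    obtain ⟨m, rfl⟩ := addOrderOf_dvd_iff_zsmul_eq_zero.mpr hka
    exact ⟨m, by rw [mul_comm, mul_zsmul, natCast_zsmul]⟩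
  · rintro ⟨m, rfl⟩
    refine ⟨m * addOrderOf a, ?_, ?_⟩
    · rw [mul_zsmul, natCast_zsmul, addOrderOf_nsmul_eq_zero, zsmul_zero]
    · rw [mul_zsmul, natCast_zsmul]

theorem ker_quotient_map_of_map_eq {N : AddSubgroup G} {M : AddSubgroup H} [N.Normal] [M.Normal]
    {f : G →+ H} (h : N.map f = M) :
    (QuotientAddGroup.map N M f (map_le_iff_le_comap.mp h.le)).ker =
      f.ker.map (QuotientAddGroup.mk' N) := by
  rw [QuotientAddGroup.ker_map, ← h, comap_map_eq, AddSubgroup.map_sup,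
    QuotientAddGroup.map_mk'_self, bot_sup_eq]

end AddGroup

/-- The quotient `(A × B) / ⟨(a, b)⟩`. The Ganter–Rezk–Huan group `Λ_{a/A}` is the case
`B = ℝ`, `b = 1`. It is reducible, so that the quotient API applies directly. -/
abbrev GanterRezkHuan {A B : Type*} [AddCommGroup A] [AddCommGroup B] (a : A) (b : B) : Type _ :=
  (A × B) ⧸ zmultiples (a, b)

namespace GanterRezkHuan

variable {A B : Type*} [AddCommGroup A] [AddCommGroup B] (a : A) (b : B)

/-- The homomorphism `ι : B → Λ` induced by the inclusion of the second factor. -/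
def inr : B →+ GanterRezkHuan a b :=
  (QuotientAddGroup.mk' _).comp (AddMonoidHom.inr A B)

theorem inr_apply (t : B) : inr a b t = QuotientAddGroup.mk (0, t) := rfl

theorem ker_inr : (inr a b).ker = zmultiples (addOrderOf a • b) := by
  rw [inr, ← comap_ker, QuotientAddGroup.ker_mk', comap_inr_zmultiples]

theorem map_fst_zmultiples : (zmultiples (a, b)).map (fst A B) = zmultiples a :=
  map_zmultiples _ _

/-- The homomorphism `p : Λ → A/⟨a⟩` induced by the projection to the first factor. -/
def toQuotient : GanterRezkHuan a b →+ A ⧸ zmultiples a :=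
  QuotientAddGroup.map _ _ (fst A B) (map_le_iff_le_comap.mp (map_fst_zmultiples a b).le)

theorem toQuotient_mk (x : A) (t : B) :
    toQuotient a b (QuotientAddGroup.mk (x, t)) = QuotientAddGroup.mk x := rfl

theorem toQuotient_surjective : Function.Surjective (toQuotient a b) :=
  QuotientAddGroup.map_surjective_of_surjective _ _ _
    ((QuotientAddGroup.mk'_surjective _).comp Prod.fst_surjective) _

theorem ker_toQuotient : (toQuotient a b).ker = (inr a b).range := by
  rw [toQuotient, ker_quotient_map_of_map_eq (map_fst_zmultiples a b), ker_prod_fst_eq_range_inr,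
    map_range, inr]

end GanterRezkHuan

open GanterRezkHuan in
theorem stmt_0_general {A B : Type*} [AddCommGroup A] [AddCommGroup B] (a : A) (b : B) :
    ∃ (ι : B →+ (A × B) ⧸ zmultiples (a, b))
      (p : ((A × B) ⧸ zmultiples (a, b)) →+ A ⧸ zmultiples a),
      (∀ t : B, ι t = QuotientAddGroup.mk ((0 : A), t)) ∧
      ι.ker = zmultiples (addOrderOf a • b) ∧
      (∀ (x : A) (t : B), p (QuotientAddGroup.mk (x, t)) = QuotientAddGroup.mk x) ∧
      Function.Surjective p ∧
      p.ker = ι.range :=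
  ⟨GanterRezkHuan.inr a b, toQuotient a b, GanterRezkHuan.inr_apply a b, ker_inr a b,
    toQuotient_mk a b, toQuotient_surjective a b, ker_toQuotient a b⟩

/-- For a finite abelian group `A`, `a ∈ A` of additive order `n`, and
`Λ_{a/A} = (A × ℝ)/⟨(a,1)⟩`: the homomorphism `ι : ℝ → Λ_{a/A}`, `t ↦ ⟦(0,t)⟧`, has kernel
the subgroup `nℤ ⊆ ℝ`; there is a homomorphism `p : Λ_{a/A} → A/⟨a⟩` with
`p ⟦(x,t)⟧ = x + ⟨a⟩`, which is surjective with kernel equal to the range of `ι`.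
That is, `0 → ℝ/nℤ → Λ_{a/A} → A/⟨a⟩ → 0` is short exact. -/
theorem stmt_0 {A : Type} [AddCommGroup A] [Fintype A] (a : A) :
    ∃ (ι : ℝ →+ (A × ℝ) ⧸ AddSubgroup.zmultiples ((a, (1 : ℝ)) : A × ℝ))
      (p : ((A × ℝ) ⧸ AddSubgroup.zmultiples ((a, (1 : ℝ)) : A × ℝ)) →+
        A ⧸ AddSubgroup.zmultiples a),
      (∀ t : ℝ, ι t = QuotientAddGroup.mk ((0 : A), t)) ∧
      ι.ker = AddSubgroup.zmultiples ((addOrderOf a : ℝ)) ∧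
      (∀ (x : A) (t : ℝ), p (QuotientAddGroup.mk (x, t)) = QuotientAddGroup.mk x) ∧
      Function.Surjective p ∧
      p.ker = ι.range := by
  simpa only [nsmul_one] using stmt_0_general a (1 : ℝ)
end

section
/- Let A be a finite abelian group (written additively), let a ∈ A, and let Λ_{a/A} = (A × ℝ)/⟨(a,1)⟩, equipped with the quotient topology coming from the product topology on A × ℝ (where A carries the discrete topology and ℝ its usual topology). Then there is an isomorphism of topological groups Λ_{a/A} ≅ (ℝ/ℤ) × (A/⟨a⟩), i.e., an additive group isomorphism from Λ_{a/A} to the product of the circle group ℝ/ℤ with the finite quotient group A/⟨a⟩ that is simultaneously a homeomorphism. -/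
/-!
Let `n` be the order of `a`. As `ℝ/nℤ` is divisible, there is a character `χ : A → ℝ/nℤ` with
`χ a = -1`. Composing the shear `(x, c) ↦ (x, χ x + c)` of `A × ℝ/nℤ` with the two projections
gives the open quotient map `(x, t) ↦ (χ x + [t], [x])` from `A × ℝ` onto `ℝ/nℤ × A/⟨a⟩`, and
its kernel is `⟨(a, 1)⟩`. Finally `ℝ/nℤ` is rescaled to `ℝ/ℤ`.
-/

open Topology

theorem exists_addMonoidHom_apply_eq_of_addOrderOf_nsmul_eq_zero {A Q : Type*} [AddCommGroup A]
    [AddCommGroup Q] [DivisibleBy Q ℤ] {a : A} {q : Q} (hq : addOrderOf a • q = 0) :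
    ∃ χ : A →+ Q, χ a = q := by
  let i : ZMod (addOrderOf a) →+ A := ZMod.lift _ ⟨zmultiplesHom A a, by simp⟩
  let f : ZMod (addOrderOf a) →+ Q := ZMod.lift _ ⟨zmultiplesHom Q q, by simpa using hq⟩
  have i_intCast (k : ℤ) : i k = k • a := ZMod.lift_coe ..
  have f_intCast (k : ℤ) : f k = k • q := ZMod.lift_coe ..
  have i_injective : Function.Injective i := by
    refine (ZMod.lift_injective _).2 fun k hk => ?_
    rw [ZMod.intCast_zmod_eq_zero_iff_dvd]
    exact addOrderOf_dvd_iff_zsmul_eq_zero.2 hk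
  obtain ⟨χ, hχ⟩ := (Module.Baer.of_divisible Q).extension_property_addMonoidHom i i_injective f
  refine ⟨χ, ?_⟩
  calc χ a = χ (i (1 : ℤ)) := by rw [i_intCast, one_zsmul]
    _ = f (1 : ℤ) := DFunLike.congr_fun hχ _
    _ = q := by rw [f_intCast, one_zsmul]

/-- The first isomorphism theorem for topological groups: a homomorphism that is a quotient map
identifies its codomain with the quotient by its kernel. The kernel is given up to a propositional
equality, so that the equivalence applies to any presentation of it. -/
noncomputable def quotientContinuousAddEquivOfIsQuotientMap {G H : Type*} [AddGroup G]
    [TopologicalSpace G] [AddGroup H] [TopologicalSpace H] (N : AddSubgroup G) [N.Normal]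
    {φ : G →+ H} (hφ : IsQuotientMap φ) (hN : N = φ.ker) : G ⧸ N ≃ₜ+ H :=
  (QuotientAddGroup.liftEquiv N hφ.surjective hN).toContinuousAddEquiv fun _ =>
    (QuotientAddGroup.isQuotientMap_mk N).isOpen_preimage.symm.trans hφ.isOpen_preimage

/-- The shear `(x, g) ↦ (x, f x + g)` of the trivial `G`-bundle over `X` along a continuous
function `f : X → G`. -/
def shearHomeomorph {X G : Type*} [TopologicalSpace X] [AddGroup G] [TopologicalSpace G]
    [IsTopologicalAddGroup G] (f : C(X, G)) : X × G ≃ₜ X × G where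
  toEquiv := Equiv.prodShear (.refl X) fun x => Equiv.addLeft (f x)
  continuous_toFun := by
    change Continuous fun z : X × G => (z.1, f z.1 + z.2)
    fun_prop
  continuous_invFun := by
    change Continuous fun z : X × G => (z.1, -f z.1 + z.2)
    fun_prop

section TwistedMk

variable {A B : Type*} [AddCommGroup A] [AddCommGroup B] {K : AddSubgroup A} {H : AddSubgroup B}

/-- The projection `A × B → B/H × A/K` twisted by a homomorphism `χ : A → B/H`, namely
`(x, y) ↦ (χ x + [y], [x])`. -/
def twistedMk (K : AddSubgroup A) (χ : A →+ B ⧸ H) : A × B →+ (B ⧸ H) × (A ⧸ K) :=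
  (χ.coprod (QuotientAddGroup.mk' H)).prod ((QuotientAddGroup.mk' K).comp (AddMonoidHom.fst A B))

theorem mem_ker_twistedMk {χ : A →+ B ⧸ H} {x : A} {y : B} :
    (x, y) ∈ (twistedMk K χ).ker ↔ χ x + y = 0 ∧ x ∈ K := by
  rw [← QuotientAddGroup.eq_zero_iff x]
  exact Prod.ext_iff

theorem isOpenQuotientMap_twistedMk [TopologicalSpace A] [ContinuousAdd A]
    [TopologicalSpace B] [IsTopologicalAddGroup B] {χ : A →+ B ⧸ H} (hχ : Continuous χ) :
    IsOpenQuotientMap (twistedMk K χ) :=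
  (IsOpenQuotientMap.id.prodMap QuotientAddGroup.isOpenQuotientMap_mk).comp <|
    (Homeomorph.prodComm _ _).isOpenQuotientMap.comp <|
      (shearHomeomorph ⟨χ, hχ⟩).isOpenQuotientMap.comp <|
        IsOpenQuotientMap.id.prodMap QuotientAddGroup.isOpenQuotientMap_mk

theorem ker_twistedMk_eq_zmultiples {a : A} {b : B}
    {χ : A →+ B ⧸ AddSubgroup.zmultiples (addOrderOf a • b)} (hχ : χ a = -(b : B ⧸ _)) :
    (twistedMk (AddSubgroup.zmultiples a) χ).ker = AddSubgroup.zmultiples (a, b) := by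
  have χ_zsmul (k : ℤ) : χ (k • a) = -((k • b : B) : B ⧸ _) := by
    rw [map_zsmul, hχ, zsmul_neg, QuotientAddGroup.mk_zsmul]
  ext ⟨x, y⟩
  simp only [mem_ker_twistedMk, AddSubgroup.mem_zmultiples_iff]
  constructor
  · rintro ⟨h, k, rfl⟩
    rw [χ_zsmul, ← QuotientAddGroup.mk_neg, ← QuotientAddGroup.mk_add,
      QuotientAddGroup.eq_zero_iff, AddSubgroup.mem_zmultiples_iff] at h
    obtain ⟨m, hm⟩ := h
    refine ⟨k + m * addOrderOf a, Prod.ext ?_ ?_⟩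
    · simp [add_zsmul, mul_zsmul]
    · simp [add_zsmul, mul_zsmul, hm]
  · rintro ⟨k, hk⟩
    obtain ⟨rfl, rfl⟩ := Prod.ext_iff.1 hk
    exact ⟨by simp [χ_zsmul], k, rfl⟩

end TwistedMk

/- If `a` has infinite order then `addOrderOf a = 0`, and the first factor is `B ⧸ 0`. -/
theorem nonempty_continuousAddEquiv_prod_quotient_zmultiples {A B : Type*} [AddCommGroup A]
    [TopologicalSpace A] [DiscreteTopology A] [AddCommGroup B] [TopologicalSpace B]
    [IsTopologicalAddGroup B] [DivisibleBy B ℤ] (a : A) (b : B) :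
    Nonempty ((A × B) ⧸ AddSubgroup.zmultiples (a, b) ≃ₜ+
      (B ⧸ AddSubgroup.zmultiples (addOrderOf a • b)) × (A ⧸ AddSubgroup.zmultiples a)) := by
  let H := AddSubgroup.zmultiples (addOrderOf a • b)
  let _ : DivisibleBy (B ⧸ H) ℤ :=
    (QuotientAddGroup.mk'_surjective H).divisibleBy _ fun x k =>
      map_zsmul (QuotientAddGroup.mk' H) k x
  have nsmul_eq_zero : addOrderOf a • (-(b : B ⧸ H)) = 0 := by
    rw [smul_neg, ← QuotientAddGroup.mk_nsmul, neg_eq_zero, QuotientAddGroup.eq_zero_iff]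
    exact AddSubgroup.mem_zmultiples _
  obtain ⟨χ, hχ⟩ := exists_addMonoidHom_apply_eq_of_addOrderOf_nsmul_eq_zero nsmul_eq_zero
  exact ⟨quotientContinuousAddEquivOfIsQuotientMap _
    (isOpenQuotientMap_twistedMk continuous_of_discreteTopology).isQuotientMap
    (ker_twistedMk_eq_zmultiples hχ).symm⟩

theorem stmt_1_general {A : Type*} [AddCommGroup A] [TopologicalSpace A] [DiscreteTopology A]
    {a : A} (ha : IsOfFinAddOrder a) :
    Nonempty ((A × ℝ) ⧸ AddSubgroup.zmultiples (a, (1 : ℝ)) ≃ₜ+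
      AddCircle (1 : ℝ) × (A ⧸ AddSubgroup.zmultiples a)) := by
  obtain ⟨e⟩ := nonempty_continuousAddEquiv_prod_quotient_zmultiples a (1 : ℝ)
  have period_ne_zero : addOrderOf a • (1 : ℝ) ≠ 0 := smul_ne_zero ha.addOrderOf_pos.ne' one_ne_zero
  exact ⟨e.trans
    { __ := (AddCircle.equivAddCircle _ (1 : ℝ) period_ne_zero one_ne_zero).prodCongr (.refl _)
      __ := (AddCircle.homeomorphAddCircle _ (1 : ℝ) period_ne_zero one_ne_zero).prodCongr
        (.refl _) }⟩

/-- For a finite abelian group `A` (with the discrete topology) and `a ∈ A`,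
the group `Λ_{a/A} = (A × ℝ)/⟨(a,1)⟩` with the quotient topology is isomorphic, as a
topological group, to `(ℝ/ℤ) × (A/⟨a⟩)`: there is an additive group isomorphism that is
continuous with continuous inverse. -/
theorem stmt_1 {A : Type} [AddCommGroup A] [Fintype A] [TopologicalSpace A]
    [DiscreteTopology A] (a : A) :
    ∃ e : ((A × ℝ) ⧸ AddSubgroup.zmultiples ((a, (1 : ℝ)) : A × ℝ)) ≃+
        (AddCircle (1 : ℝ)) × (A ⧸ AddSubgroup.zmultiples a),
      Continuous e ∧ Continuous e.symm := by
  obtain ⟨e⟩ := stmt_1_general (isOfFinAddOrder_of_finite a)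
  exact ⟨e.toAddEquiv, e.continuous_toFun, e.continuous_invFun⟩
end

section
/- Let f : A → A' be a homomorphism of finite abelian groups (written additively), let a ∈ A, and set a' = f(a). Let n and n' be the additive orders of a and a' respectively, and let Λ_{a/A} = (A × ℝ)/⟨(a,1)⟩ and Λ_{a'/A'} = (A' × ℝ)/⟨(a',1)⟩. Then: (i) n' divides n; (ii) the homomorphism A × ℝ → A' × ℝ, (x,t) ↦ (f(x), t), maps the subgroup ⟨(a,1)⟩ into the subgroup ⟨(a',1)⟩, and hence induces a homomorphism F : Λ_{a/A} → Λ_{a'/A'} with F(⟦(x,t)⟧) = ⟦(f(x), t)⟧; and (iii) writing m = n/n' and letting q : A × (ℝ/ℤ) → Λ_{a/A} and q' : A' × (ℝ/ℤ) → Λ_{a'/A'} denote the surjections q(x, t+ℤ) = ⟦(x, n·t)⟧ and q'(x', t+ℤ) = ⟦(x', n'·t)⟧, one has F ∘ q = q' ∘ (f × m·(−)), where f × m·(−) : A × (ℝ/ℤ) → A' × (ℝ/ℤ) sends (x, u) to (f(x), m·u). In particular F is the homomorphism induced on quotients by (f, m·(−)) : A × (ℝ/ℤ) → A' × (ℝ/ℤ).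 -/
/-- The quotient of `A × T` by the subgroup generated by `(a, p)`. The Ganter–Rezk–Huan group
`Λ_{a/A}` is the case `T = ℝ`, `p = 1`. -/
abbrev GanterRezkHuanGroup {A T : Type*} [AddCommGroup A] [AddCommGroup T] (a : A) (p : T) :
    Type _ :=
  (A × T) ⧸ AddSubgroup.zmultiples (a, p)

namespace GanterRezkHuanGroup

variable {A A' T : Type*} [AddCommGroup A] [AddCommGroup A'] [AddCommGroup T]

theorem map_zmultiples_prodMap_id (f : A →+ A') (a : A) (p : T) :
    (AddSubgroup.zmultiples (a, p)).map (f.prodMap (AddMonoidHom.id T)) =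
      AddSubgroup.zmultiples (f a, p) :=
  AddMonoidHom.map_zmultiples _ _

/-- The functoriality of `Λ` in the pair `(A, a)`: the homomorphism `Λ_{a/A} → Λ_{f(a)/A'}`
induced by `f × id`. -/
def map (f : A →+ A') (a : A) (p : T) :
    GanterRezkHuanGroup a p →+ GanterRezkHuanGroup (f a) p :=
  QuotientAddGroup.map _ _ (f.prodMap (AddMonoidHom.id T))
    (AddSubgroup.map_le_iff_le_comap.mp (map_zmultiples_prodMap_id f a p).le)

theorem map_mk (f : A →+ A') (a : A) (p : T) (x : A) (t : T) :
    map f a p (QuotientAddGroup.mk (x, t)) = QuotientAddGroup.mk (f x, t) :=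
  rfl

theorem mk_zero_nsmul_eq_zero {a : A} {n : ℕ} (ha : n • a = 0) (p : T) :
    (QuotientAddGroup.mk (0, n • p) : GanterRezkHuanGroup a p) = 0 := by
  rw [QuotientAddGroup.eq_zero_iff, ← ha, ← Prod.smul_mk]
  exact AddSubgroup.nsmul_mem_zmultiples _ n

/-- The homomorphism `q : A × (T/⟨p⟩) → Λ_{a/A}`, `(x, t + ⟨p⟩) ↦ ⟦(x, n • t)⟧`. Here `n` may be
any natural number annihilating `a`, the order of `a` being the case of interest. -/
def ofProdAddCircle (a : A) (p : T) (n : ℕ) (ha : n • a = 0) :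
    A × AddCircle p →+ GanterRezkHuanGroup a p :=
  ((QuotientAddGroup.mk' _).comp (AddMonoidHom.inl A T)).coprod
    (QuotientAddGroup.lift _
      (((QuotientAddGroup.mk' _).comp (AddMonoidHom.inr A T)).comp (nsmulAddMonoidHom n))
      (AddSubgroup.zmultiples_le_of_mem (mk_zero_nsmul_eq_zero ha p)))

theorem ofProdAddCircle_coe {a : A} {p : T} {n : ℕ} (ha : n • a = 0) (x : A) (t : T) :
    ofProdAddCircle a p n ha (x, (t : AddCircle p)) = QuotientAddGroup.mk (x, n • t) := by
  change (QuotientAddGroup.mk ((x, 0) + (0, n • t)) : GanterRezkHuanGroup a p) = _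
  rw [Prod.mk_add_mk, add_zero, zero_add]

theorem eq_ofProdAddCircle {a : A} {p : T} {n : ℕ} (ha : n • a = 0)
    {q : A × AddCircle p →+ GanterRezkHuanGroup a p}
    (hq : ∀ (x : A) (t : T), q (x, (t : AddCircle p)) = QuotientAddGroup.mk (x, n • t)) :
    q = ofProdAddCircle a p n ha := by
  ext ⟨x, u⟩
  obtain ⟨t, rfl⟩ := QuotientAddGroup.mk_surjective u
  exact (hq x t).trans (ofProdAddCircle_coe ha x t).symm

theorem ofProdAddCircle_surjective {a : A} {p : T} {n : ℕ} (ha : n • a = 0)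
    (hn : Function.Surjective fun t : T => n • t) :
    Function.Surjective (ofProdAddCircle a p n ha) := by
  intro y
  obtain ⟨⟨x, s⟩, rfl⟩ := QuotientAddGroup.mk_surjective y
  obtain ⟨t, rfl⟩ := hn s
  exact ⟨(x, (t : AddCircle p)), ofProdAddCircle_coe ha x t⟩

theorem map_comp_ofProdAddCircle (f : A →+ A') {a : A} {p : T} {n n' m : ℕ}
    (ha : n • a = 0) (ha' : n' • f a = 0) (hm : n' * m = n) :
    (map f a p).comp (ofProdAddCircle a p n ha) =
      (ofProdAddCircle (f a) p n' ha').comp (f.prodMap (nsmulAddMonoidHom m)) := by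
  ext ⟨x, u⟩
  obtain ⟨t, rfl⟩ := QuotientAddGroup.mk_surjective u
  calc map f a p (ofProdAddCircle a p n ha (x, (t : AddCircle p)))
      = QuotientAddGroup.mk (f x, n • t) := by rw [ofProdAddCircle_coe, map_mk]
    _ = QuotientAddGroup.mk (f x, n' • m • t) := by rw [← hm, mul_nsmul']
    _ = ofProdAddCircle (f a) p n' ha' (f x, m • (t : AddCircle p)) := by
      rw [← AddCircle.coe_nsmul, ofProdAddCircle_coe]

end GanterRezkHuanGroup

open GanterRezkHuanGroup in
theorem stmt_4_general {A A' 𝕜 : Type*} [AddCommGroup A] [AddCommGroup A'] [DivisionRing 𝕜]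
    [CharZero 𝕜] (p : 𝕜) (f : A →+ A') {a : A} (ha : IsOfFinAddOrder a)
    (q : A × AddCircle p →+ GanterRezkHuanGroup a p)
    (hq : ∀ (x : A) (t : 𝕜), q (x, (t : AddCircle p)) =
      QuotientAddGroup.mk (x, (addOrderOf a : 𝕜) * t))
    (q' : A' × AddCircle p →+ GanterRezkHuanGroup (f a) p)
    (hq' : ∀ (x' : A') (t : 𝕜), q' (x', (t : AddCircle p)) =
      QuotientAddGroup.mk (x', (addOrderOf (f a) : 𝕜) * t)) :
    addOrderOf (f a) ∣ addOrderOf a ∧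
    (AddSubgroup.zmultiples (a, p)).map (f.prodMap (AddMonoidHom.id 𝕜)) =
      AddSubgroup.zmultiples (f a, p) ∧
    ∃ F : GanterRezkHuanGroup a p →+ GanterRezkHuanGroup (f a) p,
      (∀ (x : A) (t : 𝕜), F (QuotientAddGroup.mk (x, t)) = QuotientAddGroup.mk (f x, t)) ∧
      ∀ G : GanterRezkHuanGroup a p →+ GanterRezkHuanGroup (f a) p,
        (∀ (x : A) (u : AddCircle p),
          G (q (x, u)) = q' (f x, (addOrderOf a / addOrderOf (f a)) • u)) ↔ G = F := by
  have hdvd : addOrderOf (f a) ∣ addOrderOf a := addOrderOf_map_dvd f a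
  have hn : (addOrderOf a : 𝕜) ≠ 0 := Nat.cast_ne_zero.mpr ha.addOrderOf_pos.ne'
  simp only [← nsmul_eq_mul] at hq hq'
  obtain rfl := eq_ofProdAddCircle (addOrderOf_nsmul_eq_zero a) hq
  obtain rfl := eq_ofProdAddCircle (addOrderOf_nsmul_eq_zero (f a)) hq'
  have hcomm := map_comp_ofProdAddCircle (p := p) f (addOrderOf_nsmul_eq_zero a)
    (addOrderOf_nsmul_eq_zero (f a)) (Nat.mul_div_cancel' hdvd)
  have hsurj := ofProdAddCircle_surjective (p := p) (addOrderOf_nsmul_eq_zero a)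
    fun t => ⟨(addOrderOf a : 𝕜)⁻¹ * t, (nsmul_eq_mul _ _).trans (mul_inv_cancel_left₀ hn t)⟩
  refine ⟨hdvd, map_zmultiples_prodMap_id f a p, map f a p, map_mk f a p,
    fun G => ⟨fun hG => ?_, ?_⟩⟩
  · rw [← AddMonoidHom.cancel_right hsurj, hcomm]
    exact AddMonoidHom.ext fun y => hG y.1 y.2
  · rintro rfl x u
    exact DFunLike.congr_fun hcomm (x, u)

/-- Let `f : A → A'` be a homomorphism of finite abelian groups, `a ∈ A`,
`a' = f a`, with additive orders `n`, `n'`. Then: (i) `n' ∣ n`; (ii) `(x,t) ↦ (f x, t)`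
maps `⟨(a,1)⟩` into `⟨(a',1)⟩` and hence induces `F : Λ_{a/A} → Λ_{a'/A'}` with
`F ⟦(x,t)⟧ = ⟦(f x, t)⟧`; and (iii) with `m = n / n'` and the surjections
`q : A × (ℝ/ℤ) → Λ_{a/A}`, `q' : A' × (ℝ/ℤ) → Λ_{a'/A'}` given by
`q (x, t+ℤ) = ⟦(x, n·t)⟧` and `q' (x', t+ℤ) = ⟦(x', n'·t)⟧`, one has
`F (q (x, u)) = q' (f x, m • u)` for all `x`, `u`. -/
theorem stmt_4 {A A' : Type} [AddCommGroup A] [Fintype A] [AddCommGroup A'] [Fintype A']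
    (f : A →+ A') (a : A)
    (q : (A × AddCircle (1 : ℝ)) →+
      (A × ℝ) ⧸ AddSubgroup.zmultiples ((a, (1 : ℝ)) : A × ℝ))
    (hq : ∀ (x : A) (t : ℝ), q (x, (t : AddCircle (1 : ℝ))) =
      QuotientAddGroup.mk (x, (addOrderOf a : ℝ) * t))
    (q' : (A' × AddCircle (1 : ℝ)) →+
      (A' × ℝ) ⧸ AddSubgroup.zmultiples ((f a, (1 : ℝ)) : A' × ℝ))
    (hq' : ∀ (x' : A') (t : ℝ), q' (x', (t : AddCircle (1 : ℝ))) =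
      QuotientAddGroup.mk (x', (addOrderOf (f a) : ℝ) * t)) :
    addOrderOf (f a) ∣ addOrderOf a ∧
    (AddSubgroup.zmultiples ((a, (1 : ℝ)) : A × ℝ)).map
        (f.prodMap (AddMonoidHom.id ℝ)) ≤
      AddSubgroup.zmultiples ((f a, (1 : ℝ)) : A' × ℝ) ∧
    ∃ F : ((A × ℝ) ⧸ AddSubgroup.zmultiples ((a, (1 : ℝ)) : A × ℝ)) →+
        ((A' × ℝ) ⧸ AddSubgroup.zmultiples ((f a, (1 : ℝ)) : A' × ℝ)),
      (∀ (x : A) (t : ℝ), F (QuotientAddGroup.mk (x, t)) = QuotientAddGroup.mk (f x, t)) ∧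
      ∀ (x : A) (u : AddCircle (1 : ℝ)),
        F (q (x, u)) = q' (f x, (addOrderOf a / addOrderOf (f a)) • u) := by
  obtain ⟨hdvd, hmap, F, hF, huniq⟩ :=
    stmt_4_general (1 : ℝ) f (isOfFinAddOrder_of_finite a) q hq q' hq'
  exact ⟨hdvd, hmap.le, F, hF, (huniq F).mpr rfl⟩
end
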